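/- Let ρ and σ be density operators on a finite-dimensional complex Hilbert space with supp(ρ) ⊆ supp(σ), let r > 0, and let n ≥ 1 be an integer. Then for every operator Tⁿ on the n-fold tensor power with 0 ≤ Tⁿ ≤ 𝟙^{⊗n}, Tr[ρ^{⊗n} Tⁿ] > 0, and −(1/n) log Tr[σ^{⊗n} Tⁿ] ≥ r, one has −(1/n) log Tr[ρ^{⊗n} Tⁿ] ≥ sup_{α>1} ((α−1)/α)( r − D_α^*(ρ‖σ) ). -/

import Mathlib

open Matrix
open scoped ComplexOrder Kronecker

noncomputable section

/-- Real power of a Hermitian matrix via functional calculus on its support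
(Moore–Penrose convention); junk value `0` for non-Hermitian input. -/
def Matrix.rpowH {ι : Type*} [Fintype ι] [DecidableEq ι] (A : Matrix ι ι ℂ) (p : ℝ) :
    Matrix ι ι ℂ :=
  if hA : A.IsHermitian then
    (hA.eigenvectorUnitary : Matrix ι ι ℂ) *
      Matrix.diagonal (fun i => ((hA.eigenvalues i ^ p : ℝ) : ℂ)) *
      star (hA.eigenvectorUnitary : Matrix ι ι ℂ)
  else 0

/-- Real part of the trace. -/
def retr {ι : Type*} [Fintype ι] (A : Matrix ι ι ℂ) : ℝ :=
  (Matrix.trace A).re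

/-- Sandwiched Rényi divergence
`D_α^*(ρ‖σ) = (α-1)⁻¹ log Tr[(σ^{(1-α)/(2α)} ρ σ^{(1-α)/(2α)})^α]`. -/
def sandwichedRenyiDiv {ι : Type*} [Fintype ι] [DecidableEq ι]
    (α : ℝ) (ρ σ : Matrix ι ι ℂ) : ℝ :=
  (α - 1)⁻¹ * Real.log (retr (Matrix.rpowH
    (Matrix.rpowH σ ((1 - α) / (2 * α)) * ρ * Matrix.rpowH σ ((1 - α) / (2 * α))) α))


/-- `n`-fold tensor (Kronecker) power of a matrix. -/
def tensorPow {ι : Type*} [Fintype ι] (A : Matrix ι ι ℂ) (n : ℕ) :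
    Matrix (Fin n → ι) (Fin n → ι) ℂ :=
  Matrix.of fun v w => ∏ i, A (v i) (w i)

/-!
With `X = σ^{(1-α)/(2α)} ρ σ^{(1-α)/(2α)}` and `q = (α-1)/(2α)`, the support condition gives
`Tr[ρT] = Tr[X σ^q T σ^q]`, the value at `z = 1/α` of the analytic function
`f(z) = Tr[X^{αz} σ^{(1-z)/2} T σ^{(1-z)/2}]`. On `re z = 0` it is bounded by `Tr[σT]`, since
`X^{αz}` is then a partial isometry, and on `re z = 1` by `Tr[X^α]`, since `0 ≤ T ≤ 1`. Hadamard's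
three lines theorem yields `Tr[ρT] ≤ Tr[σT]^{1-1/α} Tr[X^α]^{1/α}`. The quantity `Tr[X^α]` is
multiplicative under tensor powers, so applying this to `ρ^{⊗n}`, `σ^{⊗n}`, taking logarithms and
dividing by `n` gives the bound for each `α`.
-/

section SpectralMatrix

variable {κ : Type*} [Fintype κ] [DecidableEq κ]

/-- The normal matrix `U diag(d) U*`, whose orthonormal eigenvectors are the columns of `U` and
whose eigenvalues are `d`. Functional calculus acts on it through `d` alone. -/
def spectralMatrix (U : unitaryGroup κ ℂ) (d : κ → ℂ) : Matrix κ κ ℂ :=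
  Unitary.conjStarAlgAut ℂ (Matrix κ κ ℂ) U (diagonal d)

lemma spectralMatrix_apply (U : unitaryGroup κ ℂ) (d : κ → ℂ) (i j : κ) :
    spectralMatrix U d i j = ∑ k, U.1 i k * d k * star (U.1 j k) := by
  rw [spectralMatrix, Unitary.conjStarAlgAut_apply, mul_apply]
  simp only [mul_diagonal, star_apply]

lemma spectralMatrix_mul (U : unitaryGroup κ ℂ) (c d : κ → ℂ) :
    spectralMatrix U c * spectralMatrix U d = spectralMatrix U (c * d) := by
  simp only [spectralMatrix, ← map_mul, diagonal_mul_diagonal, Pi.mul_def]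

lemma spectralMatrix_one (U : unitaryGroup κ ℂ) : spectralMatrix U 1 = 1 := by
  simp only [spectralMatrix, diagonal_one', map_one]

lemma spectralMatrix_sub (U : unitaryGroup κ ℂ) (c d : κ → ℂ) :
    spectralMatrix U (c - d) = spectralMatrix U c - spectralMatrix U d := by
  simp only [spectralMatrix, ← map_sub, diagonal_sub, Pi.sub_def]

lemma conjTranspose_spectralMatrix (U : unitaryGroup κ ℂ) (d : κ → ℂ) :
    (spectralMatrix U d)ᴴ = spectralMatrix U (star d) := by
  simp only [spectralMatrix, ← star_eq_conjTranspose, ← map_star]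
  rw [star_eq_conjTranspose, diagonal_conjTranspose]

lemma posSemidef_spectralMatrix (U : unitaryGroup κ ℂ) {d : κ → ℂ} (hd : 0 ≤ d) :
    (spectralMatrix U d).PosSemidef :=
  (PosSemidef.diagonal hd).mul_mul_conjTranspose_same U.1

lemma trace_spectralMatrix_mul (U : unitaryGroup κ ℂ) (d : κ → ℂ) (M : Matrix κ κ ℂ) :
    (spectralMatrix U d * M).trace = ∑ j, d j * (U.1ᴴ * M * U.1) j j := by
  have hcycle : (spectralMatrix U d * M).trace = (diagonal d * (U.1ᴴ * M * U.1)).trace := by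
    rw [spectralMatrix, Unitary.conjStarAlgAut_apply, star_eq_conjTranspose, mul_assoc, mul_assoc,
      trace_mul_comm]
    simp only [mul_assoc]
  rw [hcycle]
  simp only [trace, diag, diagonal_mul]

lemma retr_spectralMatrix (U : unitaryGroup κ ℂ) (x : κ → ℝ) :
    retr (spectralMatrix U fun j ↦ (x j : ℂ)) = ∑ j, x j := by
  rw [retr, spectralMatrix, Unitary.conjStarAlgAut_apply, trace_mul_cycle,
    Unitary.coe_star_mul_self, one_mul, trace_diagonal, ← Complex.ofReal_sum, Complex.ofReal_re]

lemma spectralMatrix_eq_spectralMatrix_iff {U V : unitaryGroup κ ℂ} {c d : κ → ℂ} :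
    spectralMatrix U c = spectralMatrix V d ↔
      star V.1 * U.1 * diagonal c = diagonal d * (star V.1 * U.1) := by
  calc spectralMatrix U c = spectralMatrix V d
    _ ↔ U.1 * diagonal c = V.1 * (diagonal d * star V.1) * U.1 := by
      rw [← mul_assoc]; exact Units.mul_inv_eq_iff_eq_mul (Unitary.toUnits U)
    _ ↔ star V.1 * (U.1 * diagonal c) = diagonal d * star V.1 * U.1 := by
      rw [mul_assoc V.1]; exact (Units.inv_mul_eq_iff_eq_mul (Unitary.toUnits V)).symm
    _ ↔ _ := by simp only [mul_assoc]

/- `W = V* U` intertwines the two diagonal matrices, so `W i j = 0` unless `d i = c j`; hence it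
also intertwines `f ∘ c` and `f ∘ d`. -/
lemma spectralMatrix_comp_eq {U V : unitaryGroup κ ℂ} {c d : κ → ℂ}
    (h : spectralMatrix U c = spectralMatrix V d) (f : ℂ → ℂ) :
    spectralMatrix U (f ∘ c) = spectralMatrix V (f ∘ d) := by
  rw [spectralMatrix_eq_spectralMatrix_iff] at h ⊢
  ext i j
  have hij := congrFun₂ h i j
  simp only [mul_diagonal, diagonal_mul, Function.comp_apply] at hij ⊢
  by_cases hW : (star V.1 * U.1) i j = 0
  · simp [hW]
  · have hcd : c j = d i := mul_left_cancel₀ hW (hij.trans (mul_comm _ _))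
    rw [hcd, mul_comm]

lemma exists_eq_spectralMatrix {A : Matrix κ κ ℂ} (hA : A.PosSemidef) :
    ∃ (U : unitaryGroup κ ℂ) (x : κ → ℝ), (∀ i, 0 ≤ x i) ∧ A = spectralMatrix U fun i ↦ (x i : ℂ) :=
  ⟨_, _, hA.eigenvalues_nonneg, hA.1.spectral_theorem⟩

end SpectralMatrix

section RealPowers

variable {κ : Type*} [Fintype κ] [DecidableEq κ] {A : Matrix κ κ ℂ}

lemma rpowH_spectralMatrix (U : unitaryGroup κ ℂ) (x : κ → ℝ) (p : ℝ) :
    (spectralMatrix U fun i ↦ (x i : ℂ)).rpowH p =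
      spectralMatrix U fun i ↦ ((x i ^ p : ℝ) : ℂ) := by
  have hA : (spectralMatrix U fun i ↦ (x i : ℂ)).IsHermitian := by
    rw [IsHermitian, conjTranspose_spectralMatrix]
    congr 1
    funext i
    exact Complex.conj_ofReal _
  rw [rpowH, dif_pos hA]
  exact spectralMatrix_comp_eq hA.spectral_theorem.symm fun z ↦ ((z.re ^ p : ℝ) : ℂ)

lemma posSemidef_rpowH (hA : A.PosSemidef) (p : ℝ) : (A.rpowH p).PosSemidef := by
  obtain ⟨U, x, hx, rfl⟩ := exists_eq_spectralMatrix hA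
  rw [rpowH_spectralMatrix]
  exact posSemidef_spectralMatrix U fun i ↦ Complex.zero_le_real.mpr (Real.rpow_nonneg (hx i) p)

lemma rpowH_one (hA : A.PosSemidef) : A.rpowH 1 = A := by
  obtain ⟨U, x, -, rfl⟩ := exists_eq_spectralMatrix hA
  simp only [rpowH_spectralMatrix, Real.rpow_one]

lemma rpowH_rpowH (hA : A.PosSemidef) (p q : ℝ) : (A.rpowH p).rpowH q = A.rpowH (p * q) := by
  obtain ⟨U, x, hx, rfl⟩ := exists_eq_spectralMatrix hA
  simp only [rpowH_spectralMatrix, ← Real.rpow_mul (hx _)]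

lemma mul_rpowH_mul_rpowH_neg (hA : A.PosSemidef) (p : ℝ) :
    A * (A.rpowH p * A.rpowH (-p)) = A := by
  obtain ⟨U, x, hx, rfl⟩ := exists_eq_spectralMatrix hA
  simp only [rpowH_spectralMatrix, spectralMatrix_mul]
  congr 1
  funext i
  rcases (hx i).eq_or_lt with hi | hi
  · simp [← hi]
  · simp only [Pi.mul_apply, ← Complex.ofReal_mul, ← Real.rpow_add hi, add_neg_cancel,
      Real.rpow_zero, mul_one]

variable {ρ σ : Matrix κ κ ℂ}

lemma mul_rpowH_mul_rpowH_neg_of_ker_le (hσ : σ.PosSemidef) (hker : ∀ v, σ *ᵥ v = 0 → ρ *ᵥ v = 0)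
    (p : ℝ) : ρ * (σ.rpowH p * σ.rpowH (-p)) = ρ := by
  have hzero : ρ * (σ.rpowH p * σ.rpowH (-p) - 1) = 0 := by
    refine ext_of_mulVec_single fun i ↦ ?_
    rw [← mulVec_mulVec, zero_mulVec]
    refine hker _ ?_
    rw [mulVec_mulVec, mul_sub, mul_rpowH_mul_rpowH_neg hσ, mul_one, sub_self, zero_mulVec]
  rwa [mul_sub, mul_one, sub_eq_zero] at hzero

lemma rpowH_mul_rpowH_neg_conj_eq (hρ : ρ.IsHermitian) (hσ : σ.PosSemidef)
    (hker : ∀ v, σ *ᵥ v = 0 → ρ *ᵥ v = 0) (p : ℝ) :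
    σ.rpowH p * (σ.rpowH (-p) * ρ * σ.rpowH (-p)) * σ.rpowH p = ρ := by
  have hright : ρ * (σ.rpowH (-p) * σ.rpowH p) = ρ := by
    simpa only [neg_neg] using mul_rpowH_mul_rpowH_neg_of_ker_le hσ hker (-p)
  have hleft : σ.rpowH p * σ.rpowH (-p) * ρ = ρ := by
    simpa only [conjTranspose_mul, (posSemidef_rpowH hσ _).1.eq, hρ.eq]
      using congrArg conjTranspose hright
  calc σ.rpowH p * (σ.rpowH (-p) * ρ * σ.rpowH (-p)) * σ.rpowH p
    _ = σ.rpowH p * σ.rpowH (-p) * ρ * (σ.rpowH (-p) * σ.rpowH p) := by simp only [mul_assoc]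
    _ = ρ := by rw [hleft, hright]

end RealPowers

section TensorPowers

variable {κ : Type*} [Fintype κ]

lemma tensorPow_mul (A B : Matrix κ κ ℂ) (n : ℕ) :
    tensorPow (A * B) n = tensorPow A n * tensorPow B n := by
  ext v w
  simp only [tensorPow, of_apply, mul_apply, Finset.prod_univ_sum, Fintype.piFinset_univ,
    Finset.prod_mul_distrib]

lemma conjTranspose_tensorPow (A : Matrix κ κ ℂ) (n : ℕ) :
    (tensorPow A n)ᴴ = tensorPow Aᴴ n := by
  ext v w
  simp [tensorPow]

lemma trace_tensorPow (A : Matrix κ κ ℂ) (n : ℕ) : (tensorPow A n).trace = A.trace ^ n := by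
  simp only [trace, diag, tensorPow, of_apply, Fintype.sum_pow]

lemma retr_tensorPow {A : Matrix κ κ ℂ} (hA : A.IsHermitian) (n : ℕ) :
    retr (tensorPow A n) = retr A ^ n := by
  have hreal : A.trace = (retr A : ℂ) :=
    (Complex.conj_eq_iff_re.mp (by rw [← Complex.star_def, ← trace_conjTranspose, hA.eq])).symm
  rw [retr, trace_tensorPow, hreal, ← Complex.ofReal_pow, Complex.ofReal_re]

lemma tensorPow_diagonal [DecidableEq κ] (d : κ → ℂ) (n : ℕ) :
    tensorPow (diagonal d) n = diagonal fun v ↦ ∏ i, d (v i) := by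
  ext v w
  by_cases hvw : v = w
  · simp [tensorPow, hvw]
  · obtain ⟨i, hi⟩ := Function.ne_iff.mp hvw
    rw [diagonal_apply_ne _ hvw]
    exact Finset.prod_eq_zero (Finset.mem_univ i) (diagonal_apply_ne _ hi)

lemma tensorPow_one [DecidableEq κ] (n : ℕ) : tensorPow (1 : Matrix κ κ ℂ) n = 1 := by
  simp only [← diagonal_one, tensorPow_diagonal, Finset.prod_const_one]

lemma tensorPow_mem_unitaryGroup [DecidableEq κ] (U : unitaryGroup κ ℂ) (n : ℕ) :
    tensorPow U.1 n ∈ unitaryGroup (Fin n → κ) ℂ := by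
  rw [mem_unitaryGroup_iff, star_eq_conjTranspose, conjTranspose_tensorPow, ← tensorPow_mul,
    ← star_eq_conjTranspose, Unitary.mul_star_self_of_mem U.2, tensorPow_one]

lemma tensorPow_spectralMatrix [DecidableEq κ] (U : unitaryGroup κ ℂ) (d : κ → ℂ) (n : ℕ) :
    tensorPow (spectralMatrix U d) n =
      spectralMatrix ⟨tensorPow U.1 n, tensorPow_mem_unitaryGroup U n⟩ fun v ↦ ∏ i, d (v i) := by
  simp only [spectralMatrix, Unitary.conjStarAlgAut_apply, star_eq_conjTranspose, tensorPow_mul,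
    tensorPow_diagonal, conjTranspose_tensorPow]

variable {A ρ σ : Matrix κ κ ℂ}

lemma posSemidef_tensorPow (hA : A.PosSemidef) (n : ℕ) : (tensorPow A n).PosSemidef := by
  classical
  obtain ⟨U, x, hx, rfl⟩ := exists_eq_spectralMatrix hA
  rw [tensorPow_spectralMatrix]
  exact posSemidef_spectralMatrix _ fun v ↦
    Finset.prod_nonneg fun i _ ↦ Complex.zero_le_real.mpr (hx (v i))

lemma rpowH_tensorPow [DecidableEq κ] (hA : A.PosSemidef) (n : ℕ) (p : ℝ) :
    (tensorPow A n).rpowH p = tensorPow (A.rpowH p) n := by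
  obtain ⟨U, x, hx, rfl⟩ := exists_eq_spectralMatrix hA
  simp only [rpowH_spectralMatrix, tensorPow_spectralMatrix, ← Complex.ofReal_prod,
    Real.finsetProd_rpow _ _ fun _ _ ↦ hx _]

lemma tensorPow_mulVec_eq_zero_of_ker_le (hσ : σ.PosSemidef)
    (hker : ∀ v, σ *ᵥ v = 0 → ρ *ᵥ v = 0) (n : ℕ) {w : (Fin n → κ) → ℂ}
    (hw : tensorPow σ n *ᵥ w = 0) : tensorPow ρ n *ᵥ w = 0 := by
  classical
  have hfactor : ρ = ρ * σ.rpowH (-1) * σ := by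
    simpa only [neg_neg, rpowH_one hσ, mul_assoc]
      using (mul_rpowH_mul_rpowH_neg_of_ker_le hσ hker (-1)).symm
  rw [hfactor, tensorPow_mul, ← mulVec_mulVec, hw, mulVec_zero]

end TensorPowers

section Positivity

variable {κ : Type*} [Fintype κ]

open scoped MatrixOrder in
lemma exists_eq_conjTranspose_mul_self {A : Matrix κ κ ℂ} (hA : A.PosSemidef) :
    ∃ Q : Matrix κ κ ℂ, A = Qᴴ * Q := by
  classical exact CStarAlgebra.nonneg_iff_eq_star_mul_self.mp hA.nonneg

lemma retr_mul_nonneg {A B : Matrix κ κ ℂ} (hA : A.PosSemidef) (hB : B.PosSemidef) :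
    0 ≤ retr (A * B) := by
  obtain ⟨Q, rfl⟩ := exists_eq_conjTranspose_mul_self hB
  rw [retr, ← mul_assoc, trace_mul_cycle]
  exact (Complex.nonneg_iff.mp (hA.mul_mul_conjTranspose_same Q).trace_nonneg).1

/- Factor `T = Q* Q`; then `B T C = (Q B*)* (Q C)` and AM-GM applies to each summand. -/
lemma norm_mul_mul_apply_le {T : Matrix κ κ ℂ} (hT : T.PosSemidef) (B C : Matrix κ κ ℂ)
    (i j : κ) : ‖(B * T * C) i j‖ ≤ (((B * T * Bᴴ) i i).re + ((Cᴴ * T * C) j j).re) / 2 := by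
  obtain ⟨Q, rfl⟩ := exists_eq_conjTranspose_mul_self hT
  obtain ⟨M, rfl⟩ : ∃ M, B = Mᴴ := ⟨Bᴴ, (conjTranspose_conjTranspose B).symm⟩
  have hassoc (X Y : Matrix κ κ ℂ) : Xᴴ * (Qᴴ * Q) * Y = (Q * X)ᴴ * (Q * Y) := by
    simp only [conjTranspose_mul, mul_assoc]
  have hre (z : ℂ) : (star z * z).re = ‖z‖ ^ 2 := by
    rw [Complex.star_def, Complex.conj_mul', ← Complex.ofReal_pow, Complex.ofReal_re]
  simp only [conjTranspose_conjTranspose, hassoc, mul_apply (M := (Q * _)ᴴ), conjTranspose_apply,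
    Complex.re_sum, hre, ← Finset.sum_add_distrib, Finset.sum_div]
  refine norm_sum_le_of_le _ fun k _ ↦ ?_
  rw [norm_mul, norm_star]
  linarith [two_mul_le_add_sq ‖(Q * M) k i‖ ‖(Q * C) k j‖]

lemma re_apply_self_le_one {ι : Type*} [DecidableEq ι] {M : Matrix ι ι ℂ}
    (hM : (1 - M).PosSemidef) (j : ι) : (M j j).re ≤ 1 := by
  have h := (Complex.nonneg_iff.mp (hM.diag_nonneg (i := j))).1
  rwa [Matrix.sub_apply, one_apply_eq, Complex.sub_re, Complex.one_re, sub_nonneg] at h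

variable [DecidableEq κ]

lemma retr_mul_le_retr {A T : Matrix κ κ ℂ} (hA : A.PosSemidef) (hT : (1 - T).PosSemidef) :
    retr (A * T) ≤ retr A := by
  have h := retr_mul_nonneg hA hT
  rwa [mul_sub, mul_one, retr, trace_sub, Complex.sub_re, sub_nonneg] at h

lemma posSemidef_one_sub_mul_mul_conjTranspose {B T : Matrix κ κ ℂ}
    (hB : (1 - B * Bᴴ).PosSemidef) (hT : (1 - T).PosSemidef) :
    (1 - B * T * Bᴴ).PosSemidef := by
  have hsplit : 1 - B * T * Bᴴ = (1 - B * Bᴴ) + B * (1 - T) * Bᴴ := by noncomm_ring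
  rw [hsplit]
  exact hB.add (hT.mul_mul_conjTranspose_same B)

lemma posSemidef_one_sub_spectralMatrix_mul_mul (V : unitaryGroup κ ℂ) {b : κ → ℂ}
    (hb : ∀ i, ‖b i‖ ≤ 1) {T : Matrix κ κ ℂ} (hT : (1 - T).PosSemidef) :
    (1 - spectralMatrix V b * T * spectralMatrix V (star b)).PosSemidef := by
  rw [← conjTranspose_spectralMatrix]
  refine posSemidef_one_sub_mul_mul_conjTranspose ?_ hT
  rw [conjTranspose_spectralMatrix, spectralMatrix_mul, ← spectralMatrix_one V,
    ← spectralMatrix_sub]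
  refine posSemidef_spectralMatrix V fun i ↦ ?_
  simp only [Pi.zero_apply, Pi.sub_apply, Pi.one_apply, Pi.mul_apply, Pi.star_apply,
    Complex.star_def, Complex.mul_conj', sub_nonneg]
  exact_mod_cast pow_le_one₀ (norm_nonneg _) (hb i)

end Positivity

section Interpolation

open Complex.HadamardThreeLines

variable {κ : Type*} [Fintype κ] [DecidableEq κ]

lemma norm_trace_spectralMatrix_mul_le {T : Matrix κ κ ℂ} (hT : T.PosSemidef)
    (U : unitaryGroup κ ℂ) (a : κ → ℂ) (N : Matrix κ κ ℂ) :
    ‖(spectralMatrix U a * (N * T * N)).trace‖ ≤ ∑ j, ‖a j‖ *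
      (((U.1ᴴ * (N * T * Nᴴ) * U.1) j j).re + ((U.1ᴴ * (Nᴴ * T * N) * U.1) j j).re) / 2 := by
  rw [trace_spectralMatrix_mul]
  refine norm_sum_le_of_le _ fun j _ ↦ ?_
  rw [norm_mul, mul_div_assoc]
  gcongr
  simpa only [conjTranspose_mul, conjTranspose_conjTranspose, mul_assoc]
    using norm_mul_mul_apply_le hT (U.1ᴴ * N) (N * U.1) j j

lemma sum_re_conj_unitary_apply (U : unitaryGroup κ ℂ) (M : Matrix κ κ ℂ) :
    ∑ j, ((U.1ᴴ * M * U.1) j j).re = retr M := by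
  have h := trace_spectralMatrix_mul U 1 M
  simp only [spectralMatrix_one, one_mul, Pi.one_apply] at h
  rw [retr, h, Complex.re_sum]

lemma norm_trace_spectralMatrix_mul_le_mul_retr {T : Matrix κ κ ℂ} (hT : T.PosSemidef)
    (U V : unitaryGroup κ ℂ) {a : κ → ℂ} (b : κ → ℂ) {c : ℝ} (ha : ∀ j, ‖a j‖ ≤ c) :
    ‖(spectralMatrix U a * (spectralMatrix V b * T * spectralMatrix V b)).trace‖ ≤
      c * retr (spectralMatrix V (fun i ↦ ((‖b i‖ ^ 2 : ℝ) : ℂ)) * T) := by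
  set N := spectralMatrix V b with hN
  have hN_left : Nᴴ * N = spectralMatrix V fun i ↦ ((‖b i‖ ^ 2 : ℝ) : ℂ) := by
    rw [hN, conjTranspose_spectralMatrix, spectralMatrix_mul]
    congr 1
    funext i
    simp [Complex.conj_mul']
  have hN_normal : N * Nᴴ = Nᴴ * N := by
    simp only [hN, conjTranspose_spectralMatrix, spectralMatrix_mul, mul_comm]
  have hnonneg (B : Matrix κ κ ℂ) (j : κ) : 0 ≤ ((U.1ᴴ * (B * T * Bᴴ) * U.1) j j).re :=
    (Complex.nonneg_iff.mp
      ((hT.mul_mul_conjTranspose_same B).conjTranspose_mul_mul_same U.1).diag_nonneg).1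
  calc ‖(spectralMatrix U a * (N * T * N)).trace‖
    _ ≤ ∑ j, ‖a j‖ * (((U.1ᴴ * (N * T * Nᴴ) * U.1) j j).re +
          ((U.1ᴴ * (Nᴴ * T * N) * U.1) j j).re) / 2 :=
      norm_trace_spectralMatrix_mul_le hT U a N
    _ ≤ ∑ j, c * (((U.1ᴴ * (N * T * Nᴴ) * U.1) j j).re +
          ((U.1ᴴ * (Nᴴ * T * N) * U.1) j j).re) / 2 := by
      gcongr with j
      · exact add_nonneg (hnonneg N j) (by simpa using hnonneg Nᴴ j)
      · exact ha j
    _ = c * (retr (N * T * Nᴴ) + retr (Nᴴ * T * N)) / 2 := by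
      rw [← Finset.sum_div, ← Finset.mul_sum, Finset.sum_add_distrib, sum_re_conj_unitary_apply,
        sum_re_conj_unitary_apply]
    _ = c * retr (spectralMatrix V (fun i ↦ ((‖b i‖ ^ 2 : ℝ) : ℂ)) * T) := by
      rw [retr, retr, trace_mul_cycle N T, trace_mul_cycle Nᴴ T, hN_normal, hN_left, retr]
      ring

lemma norm_trace_spectralMatrix_mul_le_sum {T : Matrix κ κ ℂ} (hT : T.PosSemidef)
    (hT1 : (1 - T).PosSemidef) (U V : unitaryGroup κ ℂ) (a : κ → ℂ) {b : κ → ℂ}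
    (hb : ∀ i, ‖b i‖ ≤ 1) :
    ‖(spectralMatrix U a * (spectralMatrix V b * T * spectralMatrix V b)).trace‖ ≤
      ∑ j, ‖a j‖ := by
  have hU : (1 - U.1ᴴ * U.1ᴴᴴ).PosSemidef := by
    rw [conjTranspose_conjTranspose, ← star_eq_conjTranspose, Unitary.coe_star_mul_self, sub_self]
    exact .zero
  have hdiag {M : Matrix κ κ ℂ} (hM : (1 - M).PosSemidef) (j : κ) :
      ((U.1ᴴ * M * U.1) j j).re ≤ 1 :=
    re_apply_self_le_one
      (by simpa using posSemidef_one_sub_mul_mul_conjTranspose hU hM) j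
  refine (norm_trace_spectralMatrix_mul_le hT U a _).trans (Finset.sum_le_sum fun j _ ↦ ?_)
  have hb_star : ∀ i, ‖star b i‖ ≤ 1 := fun i ↦ (norm_star (b i)).trans_le (hb i)
  have hleft := hdiag (posSemidef_one_sub_spectralMatrix_mul_mul V hb hT1) j
  have hright := hdiag (posSemidef_one_sub_spectralMatrix_mul_mul V hb_star hT1) j
  rw [star_star] at hright
  rw [conjTranspose_spectralMatrix, mul_div_assoc]
  exact mul_le_of_le_one_right (norm_nonneg _) (by linarith)

/-- The complex power `x ^ w` of a nonnegative real `x`, taken to be `0` at `x = 0`. It is entire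
in `w`, whereas Mathlib's convention `0 ^ 0 = 1` makes `w ↦ 0 ^ w` discontinuous. -/
def supportCpow (x : ℝ) (w : ℂ) : ℂ := if x = 0 then 0 else (x : ℂ) ^ w

lemma differentiable_supportCpow (x : ℝ) : Differentiable ℂ (supportCpow x) := by
  unfold supportCpow
  split_ifs with hx
  · exact differentiable_const 0
  · exact fun w ↦ differentiableAt_id.const_cpow (Or.inl (Complex.ofReal_ne_zero.mpr hx))

lemma supportCpow_ofReal {x t : ℝ} (hx : 0 ≤ x) (ht : t ≠ 0) :
    supportCpow x t = ((x ^ t : ℝ) : ℂ) := by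
  by_cases h : x = 0
  · simp [supportCpow, h, Real.zero_rpow ht]
  · rw [supportCpow, if_neg h, Complex.ofReal_cpow hx]

lemma norm_supportCpow {x : ℝ} (hx : 0 ≤ x) {w : ℂ} (hw : w.re ≠ 0) :
    ‖supportCpow x w‖ = x ^ w.re := by
  rcases hx.eq_or_lt with rfl | h
  · simp [supportCpow, Real.zero_rpow hw]
  · rw [supportCpow, if_neg h.ne', Complex.norm_cpow_eq_rpow_re_of_pos h]

lemma norm_supportCpow_le {x : ℝ} (hx : 0 ≤ x) (w : ℂ) : ‖supportCpow x w‖ ≤ x ^ w.re := by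
  rcases hx.eq_or_lt with rfl | h
  · simpa [supportCpow] using Real.rpow_nonneg le_rfl w.re
  · rw [supportCpow, if_neg h.ne', Complex.norm_cpow_eq_rpow_re_of_pos h]

lemma norm_supportCpow_le_one_add {x : ℝ} (hx : 0 ≤ x) {w : ℂ} (hw : 0 ≤ w.re) (hw1 : w.re ≤ 1) :
    ‖supportCpow x w‖ ≤ 1 + x :=
  calc ‖supportCpow x w‖
    _ ≤ x ^ w.re := norm_supportCpow_le hx w
    _ ≤ (1 + x) ^ w.re := by gcongr; linarith
    _ ≤ (1 + x) ^ (1 : ℝ) := by gcongr; linarith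
    _ = 1 + x := Real.rpow_one _

/-- The analytic family `Tr[X^z σ^{(1-z)/2} T σ^{(1-z)/2}]` for `X = U diag(x) U*` and
`σ = V diag(s) V*`, to which the three lines theorem is applied on `0 ≤ re z ≤ 1`. -/
def interpolatedTrace (U V : unitaryGroup κ ℂ) (x s : κ → ℝ) (T : Matrix κ κ ℂ) (z : ℂ) : ℂ :=
  (spectralMatrix U (fun j ↦ supportCpow (x j) z) *
    (spectralMatrix V (fun i ↦ supportCpow (s i) ((1 - z) / 2)) * T *
      spectralMatrix V (fun i ↦ supportCpow (s i) ((1 - z) / 2)))).trace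

variable (U V : unitaryGroup κ ℂ) {x s : κ → ℝ} {T : Matrix κ κ ℂ}

lemma differentiable_interpolatedTrace : Differentiable ℂ (interpolatedTrace U V x s T) := by
  have hs (i : κ) : Differentiable ℂ fun z : ℂ ↦ supportCpow (s i) ((1 - z) / 2) :=
    (differentiable_supportCpow (s i)).comp (by fun_prop)
  have hx (j : κ) : Differentiable ℂ fun z : ℂ ↦ supportCpow (x j) z :=
    differentiable_supportCpow (x j)
  unfold interpolatedTrace
  simp only [trace, diag, mul_apply, spectralMatrix_apply]
  fun_prop

lemma norm_interpolatedTrace_le_retr_mul (hx : ∀ j, 0 ≤ x j) (hs : ∀ i, 0 ≤ s i)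
    (hT : T.PosSemidef) {z : ℂ} (hz : z.re = 0) :
    ‖interpolatedTrace U V x s T z‖ ≤ retr (spectralMatrix V (fun i ↦ (s i : ℂ)) * T) := by
  have hx_le (j : κ) : ‖supportCpow (x j) z‖ ≤ 1 := by
    simpa [hz] using norm_supportCpow_le (hx j) z
  have hre : ((1 - z) / 2).re = 1 / 2 := by simp [hz]
  have hs_eq (i : κ) : ‖supportCpow (s i) ((1 - z) / 2)‖ ^ 2 = s i := by
    rw [norm_supportCpow (hs i) (by norm_num [hre]), hre, ← Real.sqrt_eq_rpow, Real.sq_sqrt (hs i)]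
  simpa only [interpolatedTrace, hs_eq, one_mul] using
    norm_trace_spectralMatrix_mul_le_mul_retr hT U V (fun i ↦ supportCpow (s i) ((1 - z) / 2)) hx_le

lemma norm_interpolatedTrace_le_sum (hx : ∀ j, 0 ≤ x j) (hs : ∀ i, 0 ≤ s i)
    (hT : T.PosSemidef) (hT1 : (1 - T).PosSemidef) {z : ℂ} (hz : z.re = 1) :
    ‖interpolatedTrace U V x s T z‖ ≤ ∑ j, x j := by
  refine (norm_trace_spectralMatrix_mul_le_sum hT hT1 U V _ fun i ↦ ?_).trans
    (Finset.sum_le_sum fun j _ ↦ ?_)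
  · simpa [hz] using norm_supportCpow_le (hs i) ((1 - z) / 2)
  · simpa [hz] using norm_supportCpow_le (hx j) z

lemma norm_interpolatedTrace_le_of_mem_strip (hx : ∀ j, 0 ≤ x j) (hs : ∀ i, 0 ≤ s i)
    (hT : T.PosSemidef) (hT1 : (1 - T).PosSemidef) {z : ℂ} (hz : 0 ≤ z.re) (hz1 : z.re ≤ 1) :
    ‖interpolatedTrace U V x s T z‖ ≤ (1 + ∑ j, x j) * ∑ i, (1 + s i) ^ 2 := by
  have hx_sum : 0 ≤ ∑ j, x j := Finset.sum_nonneg fun j _ ↦ hx j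
  have hx_le (j : κ) : ‖supportCpow (x j) z‖ ≤ 1 + ∑ j, x j :=
    (norm_supportCpow_le_one_add (hx j) hz hz1).trans <| add_le_add_right
      (Finset.single_le_sum (fun j _ ↦ hx j) (Finset.mem_univ j)) 1
  have hre : ((1 - z) / 2).re = (1 - z.re) / 2 := by simp
  set b : κ → ℂ := fun i ↦ supportCpow (s i) ((1 - z) / 2)
  have hb_le (i : κ) : ‖b i‖ ≤ 1 + s i :=
    norm_supportCpow_le_one_add (hs i) (by linarith) (by linarith)
  have hb_sq : (spectralMatrix V fun i ↦ ((‖b i‖ ^ 2 : ℝ) : ℂ)).PosSemidef :=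
    posSemidef_spectralMatrix V fun i ↦ Complex.zero_le_real.mpr (sq_nonneg _)
  calc ‖interpolatedTrace U V x s T z‖
    _ ≤ (1 + ∑ j, x j) * retr (spectralMatrix V (fun i ↦ ((‖b i‖ ^ 2 : ℝ) : ℂ)) * T) :=
      norm_trace_spectralMatrix_mul_le_mul_retr hT U V b hx_le
    _ ≤ (1 + ∑ j, x j) * retr (spectralMatrix V fun i ↦ ((‖b i‖ ^ 2 : ℝ) : ℂ)) := by
      gcongr
      exact retr_mul_le_retr hb_sq hT1
    _ = (1 + ∑ j, x j) * ∑ i, ‖b i‖ ^ 2 := by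
      rw [retr_spectralMatrix]
    _ ≤ (1 + ∑ j, x j) * ∑ i, (1 + s i) ^ 2 := by
      gcongr with i
      exact hb_le i

lemma norm_interpolatedTrace_le_rpow_mul_rpow (hx : ∀ j, 0 ≤ x j) (hs : ∀ i, 0 ≤ s i)
    (hT : T.PosSemidef) (hT1 : (1 - T).PosSemidef) {θ : ℝ} (hθ : θ ∈ Set.Icc 0 1) :
    ‖interpolatedTrace U V x s T θ‖ ≤
      retr (spectralMatrix V (fun i ↦ (s i : ℂ)) * T) ^ (1 - θ) * (∑ j, x j) ^ θ := by
  have hbdd : BddAbove ((norm ∘ interpolatedTrace U V x s T) '' verticalClosedStrip 0 1) := by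
    refine ⟨(1 + ∑ j, x j) * ∑ i, (1 + s i) ^ 2, ?_⟩
    rintro _ ⟨z, ⟨hz, hz1⟩, rfl⟩
    exact norm_interpolatedTrace_le_of_mem_strip U V hx hs hT hT1 hz hz1
  simpa using norm_le_interp_of_mem_verticalClosedStrip₀₁' _
    (z := (θ : ℂ)) hθ (differentiable_interpolatedTrace U V).diffContOnCl hbdd
    (fun z hz ↦ norm_interpolatedTrace_le_retr_mul U V hx hs hT hz)
    (fun z hz ↦ norm_interpolatedTrace_le_sum U V hx hs hT hT1 hz)

lemma retr_rpowH_mul_conj_le {X σ : Matrix κ κ ℂ} (hX : X.PosSemidef) (hσ : σ.PosSemidef)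
    (hT : T.PosSemidef) (hT1 : (1 - T).PosSemidef) {θ : ℝ} (hθ : θ ∈ Set.Ioo 0 1) :
    retr (X.rpowH θ * (σ.rpowH ((1 - θ) / 2) * T * σ.rpowH ((1 - θ) / 2))) ≤
      retr (σ * T) ^ (1 - θ) * retr X ^ θ := by
  obtain ⟨U, x, hx, rfl⟩ := exists_eq_spectralMatrix hX
  obtain ⟨V, s, hs, rfl⟩ := exists_eq_spectralMatrix hσ
  have hexp : (1 - (θ : ℂ)) / 2 = ((1 - θ) / 2 : ℝ) := by push_cast; rfl
  have hnorm := norm_interpolatedTrace_le_rpow_mul_rpow U V hx hs hT hT1 ⟨hθ.1.le, hθ.2.le⟩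
  simp only [interpolatedTrace, hexp, supportCpow_ofReal (hx _) hθ.1.ne',
    supportCpow_ofReal (hs _) (half_pos (sub_pos.mpr hθ.2)).ne', ← rpowH_spectralMatrix,
    ← retr_spectralMatrix U] at hnorm
  exact (Complex.re_le_norm _).trans hnorm

end Interpolation

section SandwichedRenyi

variable {κ : Type*} [Fintype κ] [DecidableEq κ] {ρ σ T : Matrix κ κ ℂ}

/-- The sandwiched operator `σ^{(1-α)/(2α)} ρ σ^{(1-α)/(2α)}`, whose `α`-th power is traced in
`sandwichedRenyiDiv`. -/
def sandwich (α : ℝ) (ρ σ : Matrix κ κ ℂ) : Matrix κ κ ℂ :=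
  σ.rpowH ((1 - α) / (2 * α)) * ρ * σ.rpowH ((1 - α) / (2 * α))

/-- The quantity `Q_α^*(ρ‖σ) = Tr[(σ^{(1-α)/(2α)} ρ σ^{(1-α)/(2α)})^α]`, of which
`sandwichedRenyiDiv` is the logarithm up to the factor `(α - 1)⁻¹`. -/
def sandwichedRenyiQuasi (α : ℝ) (ρ σ : Matrix κ κ ℂ) : ℝ := retr ((sandwich α ρ σ).rpowH α)

lemma posSemidef_sandwich (hρ : ρ.PosSemidef) (hσ : σ.PosSemidef) (α : ℝ) :
    (sandwich α ρ σ).PosSemidef := by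
  have h := hρ.mul_mul_conjTranspose_same (σ.rpowH ((1 - α) / (2 * α)))
  rwa [(posSemidef_rpowH hσ _).1.eq] at h

lemma sandwichedRenyiQuasi_nonneg (hρ : ρ.PosSemidef) (hσ : σ.PosSemidef) (α : ℝ) :
    0 ≤ sandwichedRenyiQuasi α ρ σ :=
  (Complex.nonneg_iff.mp (posSemidef_rpowH (posSemidef_sandwich hρ hσ α) α).trace_nonneg).1

lemma sandwich_tensorPow (hσ : σ.PosSemidef) (α : ℝ) (n : ℕ) :
    sandwich α (tensorPow ρ n) (tensorPow σ n) = tensorPow (sandwich α ρ σ) n := by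
  simp only [sandwich, rpowH_tensorPow hσ, tensorPow_mul]

lemma sandwichedRenyiQuasi_tensorPow (hρ : ρ.PosSemidef) (hσ : σ.PosSemidef) (α : ℝ) (n : ℕ) :
    sandwichedRenyiQuasi α (tensorPow ρ n) (tensorPow σ n) = sandwichedRenyiQuasi α ρ σ ^ n := by
  have hS := posSemidef_sandwich hρ hσ α
  rw [sandwichedRenyiQuasi, sandwich_tensorPow hσ, rpowH_tensorPow hS,
    retr_tensorPow (posSemidef_rpowH hS α).1, sandwichedRenyiQuasi]

lemma sandwichedRenyiDiv_tensorPow (hρ : ρ.PosSemidef) (hσ : σ.PosSemidef) (α : ℝ) (n : ℕ) :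
    sandwichedRenyiDiv α (tensorPow ρ n) (tensorPow σ n) = n * sandwichedRenyiDiv α ρ σ := by
  calc sandwichedRenyiDiv α (tensorPow ρ n) (tensorPow σ n)
    _ = (α - 1)⁻¹ * Real.log (sandwichedRenyiQuasi α (tensorPow ρ n) (tensorPow σ n)) := rfl
    _ = n * ((α - 1)⁻¹ * Real.log (sandwichedRenyiQuasi α ρ σ)) := by
      rw [sandwichedRenyiQuasi_tensorPow hρ hσ, Real.log_pow]
      ring
    _ = n * sandwichedRenyiDiv α ρ σ := rfl

lemma retr_mul_eq_retr_sandwich_mul (hρ : ρ.IsHermitian) (hσ : σ.PosSemidef)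
    (hker : ∀ v, σ *ᵥ v = 0 → ρ *ᵥ v = 0) (α : ℝ) :
    retr (ρ * T) = retr (sandwich α ρ σ *
      (σ.rpowH ((α - 1) / (2 * α)) * T * σ.rpowH ((α - 1) / (2 * α)))) := by
  have hneg : (1 - α) / (2 * α) = -((α - 1) / (2 * α)) := by ring
  conv_lhs => rw [← rpowH_mul_rpowH_neg_conj_eq hρ hσ hker ((α - 1) / (2 * α))]
  rw [sandwich, hneg, retr, retr, mul_assoc (σ.rpowH _), mul_assoc (σ.rpowH _), trace_mul_comm]
  simp only [mul_assoc]

lemma retr_mul_le_rpow_mul_sandwichedRenyiQuasi_rpow (hρ : ρ.PosSemidef) (hσ : σ.PosSemidef)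
    (hker : ∀ v, σ *ᵥ v = 0 → ρ *ᵥ v = 0) (hT : T.PosSemidef) (hT1 : (1 - T).PosSemidef)
    {α : ℝ} (hα : 1 < α) :
    retr (ρ * T) ≤ retr (σ * T) ^ (1 - α⁻¹) * sandwichedRenyiQuasi α ρ σ ^ α⁻¹ := by
  have hα0 : 0 < α := zero_lt_one.trans hα
  have hS := posSemidef_sandwich hρ hσ α
  have hroot : ((sandwich α ρ σ).rpowH α).rpowH α⁻¹ = sandwich α ρ σ := by
    rw [rpowH_rpowH hS, mul_inv_cancel₀ hα0.ne', rpowH_one hS]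
  have hexp : (α - 1) / (2 * α) = (1 - α⁻¹) / 2 := by field_simp
  rw [retr_mul_eq_retr_sandwich_mul hρ.1 hσ hker α, hexp]
  simpa only [hroot, sandwichedRenyiQuasi] using
    retr_rpowH_mul_conj_le (posSemidef_rpowH hS α) hσ hT hT1
      ⟨inv_pos.mpr hα0, inv_lt_one_of_one_lt₀ hα⟩

lemma mul_neg_log_sub_sandwichedRenyiDiv_le_neg_log (hρ : ρ.PosSemidef) (hσ : σ.PosSemidef)
    (hker : ∀ v, σ *ᵥ v = 0 → ρ *ᵥ v = 0) (hT : T.PosSemidef) (hT1 : (1 - T).PosSemidef)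
    (hTρ : 0 < retr (ρ * T)) {α : ℝ} (hα : 1 < α) :
    (α - 1) / α * (-Real.log (retr (σ * T)) - sandwichedRenyiDiv α ρ σ) ≤
      -Real.log (retr (ρ * T)) := by
  have hα0 : 0 < α := zero_lt_one.trans hα
  have hbound := retr_mul_le_rpow_mul_sandwichedRenyiQuasi_rpow hρ hσ hker hT hT1 hα
  have hα_inv : 0 < 1 - α⁻¹ := sub_pos.mpr (inv_lt_one_of_one_lt₀ hα)
  have hprod_ne := (hTρ.trans_le hbound).ne'
  have hσT : 0 < retr (σ * T) := (retr_mul_nonneg hσ hT).lt_of_ne' fun h ↦ hprod_ne <| by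
    rw [h, Real.zero_rpow hα_inv.ne', zero_mul]
  have hQ : 0 < sandwichedRenyiQuasi α ρ σ :=
    (sandwichedRenyiQuasi_nonneg hρ hσ α).lt_of_ne' fun h ↦ hprod_ne <| by
      rw [h, Real.zero_rpow (inv_pos.mpr hα0).ne', mul_zero]
  have hlog : Real.log (retr (ρ * T)) ≤ (1 - α⁻¹) * Real.log (retr (σ * T)) +
      α⁻¹ * Real.log (sandwichedRenyiQuasi α ρ σ) := by
    rw [← Real.log_rpow hσT, ← Real.log_rpow hQ,
      ← Real.log_mul (Real.rpow_pos_of_pos hσT _).ne' (Real.rpow_pos_of_pos hQ _).ne']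
    exact Real.log_le_log hTρ hbound
  have hdiv : (α - 1) / α * sandwichedRenyiDiv α ρ σ =
      α⁻¹ * Real.log (sandwichedRenyiQuasi α ρ σ) := by
    rw [sandwichedRenyiDiv, ← sandwich, ← sandwichedRenyiQuasi]
    field_simp [(sub_pos.mpr hα).ne']
  have hcoef : (α - 1) / α = 1 - α⁻¹ := by field_simp
  rw [mul_sub, hdiv, hcoef]
  linarith

lemma mul_sub_sandwichedRenyiDiv_le_neg_log_tensorPow (hρ : ρ.PosSemidef) (hσ : σ.PosSemidef)
    (hker : ∀ v, σ *ᵥ v = 0 → ρ *ᵥ v = 0) {n : ℕ} (hn : n ≠ 0)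
    {T : Matrix (Fin n → κ) (Fin n → κ) ℂ} (hT : T.PosSemidef) (hT1 : (1 - T).PosSemidef)
    (hTρ : 0 < retr (tensorPow ρ n * T)) {r : ℝ}
    (hTσ : r ≤ -(1 / (n : ℝ)) * Real.log (retr (tensorPow σ n * T))) {α : ℝ} (hα : 1 < α) :
    (α - 1) / α * (r - sandwichedRenyiDiv α ρ σ) ≤
      -(1 / (n : ℝ)) * Real.log (retr (tensorPow ρ n * T)) := by
  have hα0 : 0 ≤ (α - 1) / α := div_nonneg (by linarith) (by linarith)
  have hlog := mul_neg_log_sub_sandwichedRenyiDiv_le_neg_log (posSemidef_tensorPow hρ n)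
    (posSemidef_tensorPow hσ n) (fun _ ↦ tensorPow_mulVec_eq_zero_of_ker_le hσ hker n) hT hT1
    hTρ hα
  rw [sandwichedRenyiDiv_tensorPow hρ hσ] at hlog
  calc (α - 1) / α * (r - sandwichedRenyiDiv α ρ σ)
    _ ≤ (α - 1) / α *
        (-(1 / (n : ℝ)) * Real.log (retr (tensorPow σ n * T)) - sandwichedRenyiDiv α ρ σ) :=
      mul_le_mul_of_nonneg_left (sub_le_sub_right hTσ _) hα0
    _ = 1 / n * ((α - 1) / α *
        (-Real.log (retr (tensorPow σ n * T)) - n * sandwichedRenyiDiv α ρ σ)) := by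
      field_simp
    _ ≤ 1 / n * -Real.log (retr (tensorPow ρ n * T)) := by gcongr
    _ = -(1 / (n : ℝ)) * Real.log (retr (tensorPow ρ n * T)) := by ring

end SandwichedRenyi

theorem strong_converse_exponent_product_general
    {ι : Type*} [Fintype ι] [DecidableEq ι]
    (ρ σ : Matrix ι ι ℂ)
    (hρ : ρ.PosSemidef) (hρtr : retr ρ ≤ 1)
    (hσ : σ.PosSemidef)
    (hsupp : ∀ v : ι → ℂ, σ.mulVec v = 0 → ρ.mulVec v = 0)
    (r : ℝ) (n : ℕ) (hn : 1 ≤ n)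
    (T : Matrix (Fin n → ι) (Fin n → ι) ℂ)
    (hT : T.PosSemidef) (hT1 : (1 - T).PosSemidef)
    (hTρ : 0 < retr (tensorPow ρ n * T))
    (hTσ : r ≤ -(1 / (n : ℝ)) * Real.log (retr (tensorPow σ n * T))) :
    (⨆ (α : ℝ) (_ : 1 < α), (α - 1) / α * (r - sandwichedRenyiDiv α ρ σ)) ≤
      -(1 / (n : ℝ)) * Real.log (retr (tensorPow ρ n * T)) := by
  have hTρ_le : retr (tensorPow ρ n * T) ≤ 1 := by
    refine (retr_mul_le_retr (posSemidef_tensorPow hρ n) hT1).trans ?_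
    rw [retr_tensorPow hρ.1]
    exact pow_le_one₀ (Complex.nonneg_iff.mp hρ.trace_nonneg).1 hρtr
  -- The inner supremum is over an empty family, hence `0`, when `α ≤ 1`.
  have hnonneg : 0 ≤ -(1 / (n : ℝ)) * Real.log (retr (tensorPow ρ n * T)) :=
    mul_nonneg_of_nonpos_of_nonpos (by simp) (Real.log_nonpos hTρ.le hTρ_le)
  exact Real.iSup_le (fun α ↦ Real.iSup_le (fun hα ↦
    mul_sub_sandwichedRenyiDiv_le_neg_log_tensorPow hρ hσ hsupp (Nat.one_le_iff_ne_zero.mp hn)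
      hT hT1 hTρ hTσ hα) hnonneg) hnonneg

/-- strong converse exponent lower bound for quantum hypothesis
testing with product states. For density operators `ρ, σ` with `supp ρ ⊆ supp σ`,
`r > 0`, `n ≥ 1`, and any test `0 ≤ Tⁿ ≤ 𝟙` on the `n`-fold tensor power with
`Tr[ρ^{⊗n} Tⁿ] > 0` and `-(1/n) log Tr[σ^{⊗n} Tⁿ] ≥ r`:
`-(1/n) log Tr[ρ^{⊗n} Tⁿ] ≥ sup_{α>1} ((α-1)/α)(r - D_α^*(ρ‖σ))`. -/
theorem strong_converse_exponent_product
    {ι : Type*} [Fintype ι] [DecidableEq ι]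
    (ρ σ : Matrix ι ι ℂ)
    (hρ : ρ.PosSemidef) (hρtr : ρ.trace = 1)
    (hσ : σ.PosSemidef) (hσtr : σ.trace = 1)
    (hsupp : ∀ v : ι → ℂ, σ.mulVec v = 0 → ρ.mulVec v = 0)
    (r : ℝ) (hr : 0 < r) (n : ℕ) (hn : 1 ≤ n)
    (T : Matrix (Fin n → ι) (Fin n → ι) ℂ)
    (hT : T.PosSemidef) (hT1 : (1 - T).PosSemidef)
    (hTρ : 0 < retr (tensorPow ρ n * T))
    (hTσ : r ≤ -(1 / (n : ℝ)) * Real.log (retr (tensorPow σ n * T))) :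
    (⨆ (α : ℝ) (_ : 1 < α), (α - 1) / α * (r - sandwichedRenyiDiv α ρ σ)) ≤
      -(1 / (n : ℝ)) * Real.log (retr (tensorPow ρ n * T)) := by
  exact strong_converse_exponent_product_general ρ σ hρ (by simp [retr, hρtr]) hσ hsupp r n hn T
    hT hT1 hTρ hTσ

end
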